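/- For any α ∈ (0,1) and any nonnegative weights {w_h(s,a,b)}, the trajectory of Algorithm 1 satisfies: (i) Σ_{k=1}^K Σ_{h=1}^H w_h(s_h^k,a_h^k,b_h^k)/(n_h^k)^α ≤ (2^α/(1−α)) Σ_{s,a,b,h} w_h(s,a,b)(N_h^{K+1}(s,a,b))^{1−α}, and (ii) Σ_{k=1}^K Σ_{h=1}^H w_h(s_h^k,a_h^k,b_h^k)/(ň_h^k)^α ≤ (2^{2α}H^α/(1−α)) Σ_{s,a,b,h} w_h(s,a,b)(N_h^{K+1}(s,a,b))^{1−α}; moreover, for α = 1: Σ_{k=1}^K Σ_{h=1}^H w_h(s_h^k,a_h^k,b_h^k)/n_h^k ≤ 2 Σ_{s,a,b,h} w_h(s,a,b)·log(N_h^{K+1}(s,a,b)) and Σ_{k=1}^K Σ_{h=1}^H w_h(s_h^k,a_h^k,b_h^k)/ň_h^k ≤ 4H Σ_{s,a,b,h} w_h(s,a,b)·log(N_h^{K+1}(s,a,b)). (Terms with n_h^k = 0 or ň_h^k = 0 are excluded from the left-hand sums.) -/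

import Mathlib

open Finset MeasureTheory

namespace ZSMG

/-! ## Stage structure of the stage-based algorithm -/

/-- Stage lengths (`0`-indexed): `stageLen H 0 = e₁ = H` and
`stageLen H (i+1) = ⌊(1 + 1/H) * stageLen H i⌋`. -/
def stageLen (H : ℕ) : ℕ → ℕ
  | 0 => H
  | i + 1 => stageLen H i + stageLen H i / H

/-- Total number of visits contained in the first `m` stages. -/
def stageEnd (H m : ℕ) : ℕ := ∑ i ∈ Finset.range m, stageLen H i

/-- `n` is the ending index of some stage (the set `𝓛` of the paper). -/
def IsStageEnd (H n : ℕ) : Prop := ∃ m : ℕ, n = stageEnd H (m + 1)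

/-- Index (0-based) of the stage containing the `(n+1)`-st visit,
where `n` is the number of previous visits. -/
noncomputable def curStage (H n : ℕ) : ℕ := sInf {m | n < stageEnd H (m + 1)}

/-- `ň`: the number of visits in the stage immediately preceding the current stage. -/
noncomputable def checkCnt (H n : ℕ) : ℕ :=
  if curStage H n = 0 then 0 else stageLen H (curStage H n - 1)

/-- `n`: the number of visits in all completed stages. -/
noncomputable def globCnt (H n : ℕ) : ℕ := stageEnd H (curStage H n)

/-- a probability vector on the finite type `α`. -/
def IsProbVec {α : Type*} [Fintype α] (p : α → ℝ) : Prop :=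
  (∀ i, 0 ≤ p i) ∧ ∑ i, p i = 1

/-! ## Visit counting along a trajectory -/

section Counts

variable {S A B : Type*} [DecidableEq S] [DecidableEq A] [DecidableEq B]

/-- `N_h^k(s,a,b)`: the number of visits to `y = (s,a,b)` at step `h`
before episode `k`. -/
def Nvis (x : ℕ → ℕ → S × A × B) (h k : ℕ) (y : S × A × B) : ℕ :=
  ((Finset.Ico 1 k).filter fun j => x j h = y).card

/-- `n_h^k(s)`: the number of visits to the state `s` at step `h` before episode `k`. -/
def NvisS {σ : Type*} [DecidableEq σ] (st : ℕ → ℕ → σ) (h k : ℕ) (s : σ) : ℕ :=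
  ((Finset.Ico 1 k).filter fun j => st j h = s).card

/-- the episode of the `i`-th (1-based) visit to `y` at step `h`. -/
noncomputable def visitEp (x : ℕ → ℕ → S × A × B) (h : ℕ) (y : S × A × B) (i : ℕ) : ℕ :=
  sInf {j | x j h = y ∧ Nvis x h j y = i - 1}

/-- `n_h^k` for the triple visited at step `h` of episode `k`. -/
noncomputable def nGlob (x : ℕ → ℕ → S × A × B) (H h k : ℕ) : ℕ :=
  globCnt H (Nvis x h k (x k h))

/-- `ň_h^k` for the triple visited at step `h` of episode `k`. -/
noncomputable def nCheck (x : ℕ → ℕ → S × A × B) (H h k : ℕ) : ℕ :=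
  checkCnt H (Nvis x h k (x k h))

/-- `ℓ_{h,i}^k`: the episode of the `i`-th visit (among all episodes) to the triple
visited at step `h` of episode `k`. -/
noncomputable def ell (x : ℕ → ℕ → S × A × B) (h k i : ℕ) : ℕ := visitEp x h (x k h) i

/-- `ℓ̌_{h,i}^k` relative to an arbitrary triple `y`. -/
noncomputable def ellCheckAt (x : ℕ → ℕ → S × A × B) (H h k : ℕ) (y : S × A × B) (i : ℕ) : ℕ :=
  visitEp x h y (stageEnd H (curStage H (Nvis x h k y) - 1) + i)

/-- `ℓ̌_{h,i}^k`: the episode of the `i`-th visit, in the stage immediately preceding the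
current stage, to the triple visited at step `h` of episode `k`. -/
noncomputable def ellCheck (x : ℕ → ℕ → S × A × B) (H h k i : ℕ) : ℕ :=
  ellCheckAt x H h k (x k h) i

end Counts

/-! ## Values of Markov games -/

section Game

variable {S A B : Type*} [Fintype S] [Fintype A] [Fintype B]

/-- `Pm h s a b` is a transition probability vector for every `(h,s,a,b)`. -/
def IsTransKernel (Pm : ℕ → S → A → B → S → ℝ) : Prop := ∀ h s a b, IsProbVec (Pm h s a b)

/-- `𝕍(p, f) = pᵀ (f²) - (pᵀ f)²`. -/
def Vvar (p f : S → ℝ) : ℝ := (∑ s, p s * f s ^ 2) - (∑ s, p s * f s) ^ 2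

/-- `(P_h f)(s,a,b) = E_{s' ~ P_h(·|s,a,b)} [f s']`. -/
def Pexp (Pm : ℕ → S → A → B → S → ℝ) (h : ℕ) (s : S) (a : A) (b : B) (f : S → ℝ) : ℝ :=
  ∑ s', Pm h s a b s' * f s'

/-- coarse correlated equilibrium of the pair of matrices `(Qu, Ql)`. -/
def IsCCE (pi Qu Ql : A → B → ℝ) : Prop :=
  IsProbVec (fun ab : A × B => pi ab.1 ab.2) ∧
  (∀ a' : A, ∑ a, ∑ b, pi a b * Qu a' b ≤ ∑ a, ∑ b, pi a b * Qu a b) ∧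
  (∀ b' : B, ∑ a, ∑ b, pi a b * Ql a b ≤ ∑ a, ∑ b, pi a b * Ql a b')

/-- value of the correlated Markov policy `pol` with `t` steps remaining
(so at step `H - t + 1`). -/
noncomputable def VpiAux (H : ℕ) (Pm : ℕ → S → A → B → S → ℝ) (r : ℕ → S → A → B → ℝ)
    (pol : ℕ → S → A → B → ℝ) : ℕ → S → ℝ
  | 0, _ => 0
  | t + 1, s => ∑ a, ∑ b, pol (H - t) s a b *
      (r (H - t) s a b + ∑ s', Pm (H - t) s a b s' * VpiAux H Pm r pol t s')

/-- `V_h^π(s)` for a correlated Markov policy `π`. -/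
noncomputable def Vpi (H : ℕ) (Pm : ℕ → S → A → B → S → ℝ) (r : ℕ → S → A → B → ℝ)
    (pol : ℕ → S → A → B → ℝ) (h : ℕ) (s : S) : ℝ := VpiAux H Pm r pol (H + 1 - h) s

/-- `Q_h^π(s,a,b)` for a correlated Markov policy `π`. -/
noncomputable def Qpi (H : ℕ) (Pm : ℕ → S → A → B → S → ℝ) (r : ℕ → S → A → B → ℝ)
    (pol : ℕ → S → A → B → ℝ) (h : ℕ) (s : S) (a : A) (b : B) : ℝ :=
  r h s a b + ∑ s', Pm h s a b s' * Vpi H Pm r pol (h + 1) s'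

/-- Nash value with `t` steps remaining. -/
noncomputable def VstarAux (H : ℕ) (Pm : ℕ → S → A → B → S → ℝ)
    (r : ℕ → S → A → B → ℝ) : ℕ → S → ℝ
  | 0, _ => 0
  | t + 1, s =>
      ⨆ p ∈ {p : A → ℝ | IsProbVec p}, ⨅ q ∈ {q : B → ℝ | IsProbVec q},
        ∑ a, ∑ b, p a * q b *
          (r (H - t) s a b + ∑ s', Pm (H - t) s a b s' * VstarAux H Pm r t s')

/-- `V_h^*`: the Nash equilibrium value function. -/
noncomputable def Vstar (H : ℕ) (Pm : ℕ → S → A → B → S → ℝ) (r : ℕ → S → A → B → ℝ)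
    (h : ℕ) (s : S) : ℝ := VstarAux H Pm r (H + 1 - h) s

/-- `Q_h^*`: the Nash equilibrium action-value function. -/
noncomputable def Qstar (H : ℕ) (Pm : ℕ → S → A → B → S → ℝ) (r : ℕ → S → A → B → ℝ)
    (h : ℕ) (s : S) (a : A) (b : B) : ℝ :=
  r h s a b + ∑ s', Pm h s a b s' * Vstar H Pm r (h + 1) s'

/-- value of a pair of general (history-dependent) policies, with `t` steps remaining;
the history is the reversed list of the previously visited `(s,a,b)` triples. -/
noncomputable def VgenAux (H : ℕ) (Pm : ℕ → S → A → B → S → ℝ) (r : ℕ → S → A → B → ℝ)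
    (mu : List (S × A × B) → S → A → ℝ) (nu : List (S × A × B) → S → B → ℝ) :
    ℕ → List (S × A × B) → S → ℝ
  | 0, _, _ => 0
  | t + 1, hist, s => ∑ a, ∑ b, mu hist s a * nu hist s b *
      (r (H - t) s a b + ∑ s', Pm (H - t) s a b s' * VgenAux H Pm r mu nu t ((s, a, b) :: hist) s')

/-- `V₁^{μ,ν}(s)` for general policies `μ, ν`. -/
noncomputable def Vgen (H : ℕ) (Pm : ℕ → S → A → B → S → ℝ) (r : ℕ → S → A → B → ℝ)
    (mu : List (S × A × B) → S → A → ℝ) (nu : List (S × A × B) → S → B → ℝ) (s : S) : ℝ :=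
  VgenAux H Pm r mu nu H [] s

/-- `V₁^{†,ν}(s) = sup_μ V₁^{μ,ν}(s)`: value of the best response against `ν`. -/
noncomputable def VdagNu (H : ℕ) (Pm : ℕ → S → A → B → S → ℝ) (r : ℕ → S → A → B → ℝ)
    (nu : List (S × A × B) → S → B → ℝ) (s : S) : ℝ :=
  ⨆ mu ∈ {mu : List (S × A × B) → S → A → ℝ | ∀ hist s', IsProbVec (mu hist s')},
    Vgen H Pm r mu nu s

/-- `V₁^{μ,†}(s) = inf_ν V₁^{μ,ν}(s)`: value of `μ` against its best response. -/
noncomputable def VmuDag (H : ℕ) (Pm : ℕ → S → A → B → S → ℝ) (r : ℕ → S → A → B → ℝ)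
    (mu : List (S × A × B) → S → A → ℝ) (s : S) : ℝ :=
  ⨅ nu ∈ {nu : List (S × A × B) → S → B → ℝ | ∀ hist s', IsProbVec (nu hist s')},
    Vgen H Pm r mu nu s

end Game

/-! ## The certified policies of Algorithm 2 -/

section Certified

variable {S A B : Type*} [Fintype S] [Fintype A] [Fintype B]
  [DecidableEq S] [DecidableEq A] [DecidableEq B]

/-- Weight placed on episode `k` by the certified-policy construction after observing the
(reversed) history `hist`; `g k h y` is the probability that the policy of episode `k`
takes the relevant player's own action of `y` at step `h`. -/
noncomputable def certW (x : ℕ → ℕ → S × A × B) (H K : ℕ) (g : ℕ → ℕ → S × A × B → ℝ) :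
    List (S × A × B) → ℕ → ℝ
  | [], k => if k ∈ Finset.Icc 1 K then (K : ℝ)⁻¹ else 0
  | y :: hist, k' =>
      (∑ k ∈ Finset.Icc 1 K, certW x H K g hist k * g k (hist.length + 1) y *
          (Nvis x (hist.length + 1) k y : ℝ)⁻¹ *
          (((Finset.Icc 1 (Nvis x (hist.length + 1) k y)).filter
              fun j => ellCheckAt x H (hist.length + 1) k y j = k').card : ℝ)) /
        ∑ k ∈ Finset.Icc 1 K, certW x H K g hist k * g k (hist.length + 1) y

/-- `μ^out`: the certified policy of the max-player (Algorithm 2), as a general policy. -/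
noncomputable def certMax (x : ℕ → ℕ → S × A × B) (H K : ℕ)
    (pol : ℕ → ℕ → S → A → B → ℝ) : List (S × A × B) → S → A → ℝ := fun hist s a =>
  ∑ k ∈ Finset.Icc 1 K,
    certW x H K (fun k' h' y => ∑ b, pol k' h' y.1 y.2.1 b) hist k *
      ∑ b, pol k (hist.length + 1) s a b

/-- `ν^out`: the certified policy of the min-player, as a general policy. -/
noncomputable def certMin (x : ℕ → ℕ → S × A × B) (H K : ℕ)
    (pol : ℕ → ℕ → S → A → B → ℝ) : List (S × A × B) → S → B → ℝ := fun hist s b =>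
  ∑ k ∈ Finset.Icc 1 K,
    certW x H K (fun k' h' y => ∑ a, pol k' h' y.1 a y.2.2) hist k *
      ∑ a, pol k (hist.length + 1) s a b

end Certified

/-! ## Data describing one run of Algorithm 1 -/

/-- All quantities maintained by Algorithm 1 along one run: the trajectory
`(s_h^k, a_h^k, b_h^k)`, the CCE policies `π_h^k`, and the optimistic/pessimistic
(action-)value and reference value functions, each indexed by
(episode, step); the value at episode `k` is the value at the *beginning* of episode `k`. -/
structure RunData (S A B : Type*) where
  st : ℕ → ℕ → S
  aa : ℕ → ℕ → A
  bb : ℕ → ℕ → B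
  pol : ℕ → ℕ → S → A → B → ℝ
  Qup : ℕ → ℕ → S → A → B → ℝ
  Qlo : ℕ → ℕ → S → A → B → ℝ
  Vup : ℕ → ℕ → S → ℝ
  Vlo : ℕ → ℕ → S → ℝ
  VrefUp : ℕ → ℕ → S → ℝ
  VrefLo : ℕ → ℕ → S → ℝ

namespace RunData

variable {S A B : Type*} [DecidableEq S] [DecidableEq A] [DecidableEq B] (R : RunData S A B)

/-- the trajectory of visited triples. -/
def x : ℕ → ℕ → S × A × B := fun k h => (R.st k h, R.aa k h, R.bb k h)

/-- `n_h^k`. -/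
noncomputable def n (H h k : ℕ) : ℕ := nGlob R.x H h k

/-- `ň_h^k`. -/
noncomputable def nchk (H h k : ℕ) : ℕ := nCheck R.x H h k

/-- `ℓ_{h,i}^k`. -/
noncomputable def L (h k i : ℕ) : ℕ := ell R.x h k i

/-- `ℓ̌_{h,i}^k`. -/
noncomputable def Lc (H h k i : ℕ) : ℕ := ellCheck R.x H h k i

/-- `v̌/ň` for the optimistic values. -/
noncomputable def vChkUp (H h k : ℕ) : ℝ :=
  (∑ i ∈ Finset.Icc 1 (R.nchk H h k),
    R.Vup (R.Lc H h k i) (h + 1) (R.st (R.Lc H h k i) (h + 1))) / (R.nchk H h k : ℝ)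

/-- `v̌/ň` for the pessimistic values. -/
noncomputable def vChkLo (H h k : ℕ) : ℝ :=
  (∑ i ∈ Finset.Icc 1 (R.nchk H h k),
    R.Vlo (R.Lc H h k i) (h + 1) (R.st (R.Lc H h k i) (h + 1))) / (R.nchk H h k : ℝ)

/-- `μ̄^ref/n`. -/
noncomputable def refMeanUp (H h k : ℕ) : ℝ :=
  (∑ i ∈ Finset.Icc 1 (R.n H h k),
    R.VrefUp (R.L h k i) (h + 1) (R.st (R.L h k i) (h + 1))) / (R.n H h k : ℝ)

/-- `μ̲^ref/n`. -/
noncomputable def refMeanLo (H h k : ℕ) : ℝ :=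
  (∑ i ∈ Finset.Icc 1 (R.n H h k),
    R.VrefLo (R.L h k i) (h + 1) (R.st (R.L h k i) (h + 1))) / (R.n H h k : ℝ)

/-- `ν̄^{ref} = σ̄^{ref}/n - (μ̄^{ref}/n)²`. -/
noncomputable def nuRefUp (H h k : ℕ) : ℝ :=
  (∑ i ∈ Finset.Icc 1 (R.n H h k),
    R.VrefUp (R.L h k i) (h + 1) (R.st (R.L h k i) (h + 1)) ^ 2) / (R.n H h k : ℝ)
    - R.refMeanUp H h k ^ 2

/-- `ν̲^{ref} = σ̲^{ref}/n - (μ̲^{ref}/n)²`. -/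
noncomputable def nuRefLo (H h k : ℕ) : ℝ :=
  (∑ i ∈ Finset.Icc 1 (R.n H h k),
    R.VrefLo (R.L h k i) (h + 1) (R.st (R.L h k i) (h + 1)) ^ 2) / (R.n H h k : ℝ)
    - R.refMeanLo H h k ^ 2

/-- `μ̌̄/ň`: mean of the optimistic advantages over the previous stage. -/
noncomputable def advMeanUp (H h k : ℕ) : ℝ :=
  (∑ i ∈ Finset.Icc 1 (R.nchk H h k),
    (R.Vup (R.Lc H h k i) (h + 1) (R.st (R.Lc H h k i) (h + 1)) -
     R.VrefUp (R.Lc H h k i) (h + 1) (R.st (R.Lc H h k i) (h + 1)))) / (R.nchk H h k : ℝ)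

/-- `μ̲̌/ň`: mean of the pessimistic advantages over the previous stage. -/
noncomputable def advMeanLo (H h k : ℕ) : ℝ :=
  (∑ i ∈ Finset.Icc 1 (R.nchk H h k),
    (R.Vlo (R.Lc H h k i) (h + 1) (R.st (R.Lc H h k i) (h + 1)) -
     R.VrefLo (R.Lc H h k i) (h + 1) (R.st (R.Lc H h k i) (h + 1)))) / (R.nchk H h k : ℝ)

/-- `ν̌̄ = σ̌̄/ň - (μ̌̄/ň)²`. -/
noncomputable def nuChkUp (H h k : ℕ) : ℝ :=
  (∑ i ∈ Finset.Icc 1 (R.nchk H h k),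
    (R.Vup (R.Lc H h k i) (h + 1) (R.st (R.Lc H h k i) (h + 1)) -
     R.VrefUp (R.Lc H h k i) (h + 1) (R.st (R.Lc H h k i) (h + 1))) ^ 2) / (R.nchk H h k : ℝ)
    - R.advMeanUp H h k ^ 2

/-- `ν̲̌ = σ̲̌/ň - (μ̲̌/ň)²`. -/
noncomputable def nuChkLo (H h k : ℕ) : ℝ :=
  (∑ i ∈ Finset.Icc 1 (R.nchk H h k),
    (R.Vlo (R.Lc H h k i) (h + 1) (R.st (R.Lc H h k i) (h + 1)) -
     R.VrefLo (R.Lc H h k i) (h + 1) (R.st (R.Lc H h k i) (h + 1))) ^ 2) / (R.nchk H h k : ℝ)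
    - R.advMeanLo H h k ^ 2

/-- the Hoeffding-type bonus `γ = 2√(H²ι/ň)`. -/
noncomputable def gammaB (H : ℕ) (iota : ℝ) (h k : ℕ) : ℝ :=
  2 * Real.sqrt ((H : ℝ) ^ 2 * iota / (R.nchk H h k : ℝ))

/-- the optimistic variance-based bonus `β̄`. -/
noncomputable def betaUp (H : ℕ) (iota c1 c2 c3 : ℝ) (h k : ℕ) : ℝ :=
  c1 * Real.sqrt (R.nuRefUp H h k * iota / (R.n H h k : ℝ)) +
  c2 * Real.sqrt (R.nuChkUp H h k * iota / (R.nchk H h k : ℝ)) +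
  c3 * ((H : ℝ) * iota / (R.n H h k : ℝ) + (H : ℝ) * iota / (R.nchk H h k : ℝ) +
    (H : ℝ) * iota ^ (3 / 4 : ℝ) / (R.n H h k : ℝ) ^ (3 / 4 : ℝ) +
    (H : ℝ) * iota ^ (3 / 4 : ℝ) / (R.nchk H h k : ℝ) ^ (3 / 4 : ℝ))

/-- the pessimistic variance-based bonus `β̲`. -/
noncomputable def betaLo (H : ℕ) (iota c1 c2 c3 : ℝ) (h k : ℕ) : ℝ :=
  c1 * Real.sqrt (R.nuRefLo H h k * iota / (R.n H h k : ℝ)) +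
  c2 * Real.sqrt (R.nuChkLo H h k * iota / (R.nchk H h k : ℝ)) +
  c3 * ((H : ℝ) * iota / (R.n H h k : ℝ) + (H : ℝ) * iota / (R.nchk H h k : ℝ) +
    (H : ℝ) * iota ^ (3 / 4 : ℝ) / (R.n H h k : ℝ) ^ (3 / 4 : ℝ) +
    (H : ℝ) * iota ^ (3 / 4 : ℝ) / (R.nchk H h k : ℝ) ^ (3 / 4 : ℝ))

section WithFintype

variable [Fintype S] [Fintype A] [Fintype B]

/-- `ψ_{h+1}^k`. -/
noncomputable def psiTerm (Pm : ℕ → S → A → B → S → ℝ) (H K h k : ℕ) : ℝ :=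
  Pexp Pm h (R.st k h) (R.aa k h) (R.bb k h) fun s' =>
    (∑ i ∈ Finset.Icc 1 (R.n H h k),
        (R.VrefUp (R.L h k i) (h + 1) s' - R.VrefLo (R.L h k i) (h + 1) s')) / (R.n H h k : ℝ) -
      (R.VrefUp (K + 1) (h + 1) s' - R.VrefLo (K + 1) (h + 1) s')

/-- `ξ_{h+1}^k`. -/
noncomputable def xiTerm (Pm : ℕ → S → A → B → S → ℝ) (H h k : ℕ) : ℝ :=
  (∑ i ∈ Finset.Icc 1 (R.nchk H h k),
      (Pexp Pm h (R.st k h) (R.aa k h) (R.bb k h)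
          (fun s' => R.Vup (R.Lc H h k i) (h + 1) s' - R.Vlo (R.Lc H h k i) (h + 1) s') -
        (R.Vup (R.Lc H h k i) (h + 1) (R.st (R.Lc H h k i) (h + 1)) -
          R.Vlo (R.Lc H h k i) (h + 1) (R.st (R.Lc H h k i) (h + 1))))) / (R.nchk H h k : ℝ)

/-- `Λ_{h+1}^k = ψ_{h+1}^k + ξ_{h+1}^k + 2β̄_h^k + 2β̲_h^k`. -/
noncomputable def lamTerm (Pm : ℕ → S → A → B → S → ℝ) (H K : ℕ) (iota c1 c2 c3 : ℝ)
    (h k : ℕ) : ℝ :=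
  R.psiTerm Pm H K h k + R.xiTerm Pm H h k +
    2 * R.betaUp H iota c1 c2 c3 h k + 2 * R.betaLo H iota c1 c2 c3 h k

/-- `R` is a run of Algorithm 1 (with parameters `H K r ι c₁ c₂ c₃ N₀`): initialization,
stage-end update rules for the optimistic and pessimistic action-value functions, CCE policy
and value updates, and the min-gap reference-value update. -/
def Valid (H K : ℕ) (r : ℕ → S → A → B → ℝ) (iota c1 c2 c3 : ℝ) (N0 : ℕ) : Prop :=
  (∀ h, 1 ≤ h → h ≤ H → ∀ s a b,
      R.Qup 1 h s a b = (H : ℝ) - h + 1 ∧ R.Qlo 1 h s a b = 0) ∧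
  (∀ h, 1 ≤ h → h ≤ H → ∀ s,
      R.Vup 1 h s = (H : ℝ) - h + 1 ∧ R.Vlo 1 h s = 0 ∧
      R.VrefUp 1 h s = (H : ℝ) ∧ R.VrefLo 1 h s = 0) ∧
  (∀ k s, R.Vup k (H + 1) s = 0 ∧ R.Vlo k (H + 1) s = 0 ∧
      R.VrefUp k (H + 1) s = 0 ∧ R.VrefLo k (H + 1) s = 0) ∧
  (∀ k h s, IsProbVec fun ab : A × B => R.pol k h s ab.1 ab.2) ∧
  (∀ k, 1 ≤ k → k ≤ K → ∀ h, 1 ≤ h → h ≤ H → ∀ s a b,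
    (((s, a, b) = R.x k h ∧ IsStageEnd H (Nvis R.x h (k + 1) (R.x k h))) →
      R.Qup (k + 1) h s a b =
        min (min (r h s a b + R.vChkUp H h k + R.gammaB H iota h k)
              (r h s a b + R.refMeanUp H h k + R.advMeanUp H h k +
                R.betaUp H iota c1 c2 c3 h k))
          (R.Qup k h s a b) ∧
      R.Qlo (k + 1) h s a b =
        max (max (r h s a b + R.vChkLo H h k - R.gammaB H iota h k)
              (r h s a b + R.refMeanLo H h k + R.advMeanLo H h k -
                R.betaLo H iota c1 c2 c3 h k))
          (R.Qlo k h s a b)) ∧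
    (¬((s, a, b) = R.x k h ∧ IsStageEnd H (Nvis R.x h (k + 1) (R.x k h))) →
      R.Qup (k + 1) h s a b = R.Qup k h s a b ∧ R.Qlo (k + 1) h s a b = R.Qlo k h s a b)) ∧
  (∀ k, 1 ≤ k → k ≤ K → ∀ h, 1 ≤ h → h ≤ H → ∀ s,
    ((s = R.st k h ∧ IsStageEnd H (Nvis R.x h (k + 1) (R.x k h))) →
      IsCCE (fun a b => R.pol (k + 1) h s a b) (fun a b => R.Qup (k + 1) h s a b)
        (fun a b => R.Qlo (k + 1) h s a b) ∧
      R.Vup (k + 1) h s = ∑ a, ∑ b, R.pol (k + 1) h s a b * R.Qup (k + 1) h s a b ∧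
      R.Vlo (k + 1) h s = ∑ a, ∑ b, R.pol (k + 1) h s a b * R.Qlo (k + 1) h s a b) ∧
    (¬(s = R.st k h ∧ IsStageEnd H (Nvis R.x h (k + 1) (R.x k h))) →
      R.pol (k + 1) h s = R.pol k h s ∧
      R.Vup (k + 1) h s = R.Vup k h s ∧ R.Vlo (k + 1) h s = R.Vlo k h s)) ∧
  (∀ k, 1 ≤ k → k ≤ K → ∀ h, 1 ≤ h → h ≤ H → ∀ s,
    ((s = R.st k h ∧ NvisS R.st h (k + 1) s = N0) →
      ∃ j, 1 ≤ j ∧ j ≤ k + 1 ∧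
        R.VrefUp (k + 1) h s = R.Vup j h s ∧ R.VrefLo (k + 1) h s = R.Vlo j h s ∧
        ∀ j', 1 ≤ j' → j' ≤ k + 1 →
          R.Vup j h s - R.Vlo j h s ≤ R.Vup j' h s - R.Vlo j' h s) ∧
    (¬(s = R.st k h ∧ NvisS R.st h (k + 1) s = N0) →
      R.VrefUp (k + 1) h s = R.VrefUp k h s ∧ R.VrefLo (k + 1) h s = R.VrefLo k h s))

end WithFintype

end RunData

/-- The probabilistic structure of a run of Algorithm 1 on the Markov game with transition
kernel `Pm`: with respect to the filtration `F` (indexed by the time `(k-1)*(H+1)+h`), the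
trajectory is adapted, the next state is sampled from `P_h(·|s_h^k,a_h^k,b_h^k)`, and the
actions are sampled from the CCE policy `π_h^k`. -/
def SampledRun {S A B : Type*} [Fintype S] [Fintype A] [Fintype B]
    [MeasurableSpace S] [MeasurableSpace A] [MeasurableSpace B]
    {Ω : Type*} [m0 : MeasurableSpace Ω] (P : Measure Ω)
    (H : ℕ) (Pm : ℕ → S → A → B → S → ℝ)
    (Rv : Ω → RunData S A B) (F : Filtration ℕ m0) : Prop :=
  (∀ k h, 1 ≤ k → 1 ≤ h → h ≤ H + 1 →
      @Measurable Ω S (F ((k - 1) * (H + 1) + h)) _ fun ω => (Rv ω).st k h) ∧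
  (∀ k h, 1 ≤ k → 1 ≤ h → h ≤ H →
      (@Measurable Ω A (F ((k - 1) * (H + 1) + h)) _ fun ω => (Rv ω).aa k h) ∧
      (@Measurable Ω B (F ((k - 1) * (H + 1) + h)) _ fun ω => (Rv ω).bb k h)) ∧
  (∀ k h, 1 ≤ k → 1 ≤ h → h ≤ H → ∀ f : S → ℝ,
      (P[(fun ω => f ((Rv ω).st k (h + 1)))|F ((k - 1) * (H + 1) + h)]) =ᵐ[P]
        fun ω => ∑ s', Pm h ((Rv ω).st k h) ((Rv ω).aa k h) ((Rv ω).bb k h) s' * f s') ∧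
  (∀ k h, 1 ≤ k → 1 ≤ h → h ≤ H → ∀ f : A → B → ℝ,
      (P[(fun ω => f ((Rv ω).aa k h) ((Rv ω).bb k h))|F ((k - 1) * (H + 1) + h - 1)]) =ᵐ[P]
        fun ω => ∑ a, ∑ b, (Rv ω).pol k h ((Rv ω).st k h) a b * f a b)

/-!
Fix a step `h`. Grouping the episodes by the visited triple `y` turns each left-hand side into
`∑ y, w h y * ∑ t < N(y), φ t`, where `φ t` is `(globCnt H t)⁻¹` or `(checkCnt H t)⁻¹`, to the power
`α` in the first two bounds. So only the inner sums have to be bounded.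

Every stage but the first exceeds the total length of its predecessors by at most one visit, hence
`t ≤ 2 * globCnt H t` once a stage is complete, and `∑ t ^ (-α)` telescopes against `t ^ (1 - α)` by
concavity. For `α = 1` the resulting harmonic sum would leave an additive constant. Instead the
terms are summed stage by stage: they equal `1 / s` on the stage that begins after `s > 0` visits,
and `(n - s) / s ≤ 2 * log (n / s)` as `n ≤ 3 * s`, so the logarithms telescope. Finally
`globCnt ≤ 2 * H * checkCnt`, because the stage lengths grow by a factor of about `1 + 1 / H`.
-/

section RealInequalities

lemma rpow_le_rpow_add_mul_sub {p x y : ℝ} (hp0 : 0 ≤ p) (hp1 : p ≤ 1) (hx : 0 < x)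
    (hy : 0 ≤ y) : y ^ p ≤ x ^ p + p * x ^ (p - 1) * (y - x) := by
  have bernoulli : (y / x) ^ p ≤ 1 + p * (y / x - 1) := by
    have hyx : -1 ≤ y / x - 1 := by linarith [div_nonneg hy hx.le]
    simpa only [add_sub_cancel] using rpow_one_add_le_one_add_mul_self hyx hp0 hp1
  calc y ^ p = x ^ p * (y / x) ^ p := by
        rw [Real.div_rpow hy hx.le, mul_div_cancel₀ _ (by positivity)]
    _ ≤ x ^ p * (1 + p * (y / x - 1)) := by gcongr
    _ = x ^ p + p * x ^ (p - 1) * (y - x) := by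
        rw [Real.rpow_sub_one hx.ne']
        field_simp

lemma sum_range_inv_succ_rpow_le {α : ℝ} (hα0 : 0 ≤ α) (hα1 : α < 1) (n : ℕ) :
    ∑ t ∈ range n, (((t + 1 : ℕ) : ℝ) ^ α)⁻¹ ≤ (n : ℝ) ^ (1 - α) / (1 - α) := by
  have hα : 0 < 1 - α := sub_pos.mpr hα1
  induction n with
  | zero => simp [Real.zero_rpow hα.ne']
  | succ n ih =>
    have tangent := rpow_le_rpow_add_mul_sub hα.le (sub_le_self 1 hα0)
      (Nat.cast_pos.mpr n.succ_pos) n.cast_nonneg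
    have increment : (((n + 1 : ℕ) : ℝ) ^ α)⁻¹ ≤
        (((n + 1 : ℕ) : ℝ) ^ (1 - α) - (n : ℝ) ^ (1 - α)) / (1 - α) := by
      rw [le_div_iff₀ hα, ← Real.rpow_neg (Nat.cast_nonneg _)]
      rw [sub_sub_cancel_left, Nat.succ_eq_add_one] at tangent
      push_cast at tangent ⊢
      linarith
    rw [sum_range_succ]
    linarith [sub_div (((n + 1 : ℕ) : ℝ) ^ (1 - α)) ((n : ℝ) ^ (1 - α)) (1 - α)]

lemma sum_range_inv_rpow_le {α : ℝ} (hα0 : 0 < α) (hα1 : α < 1) (n : ℕ) :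
    ∑ t ∈ range n, ((t : ℝ) ^ α)⁻¹ ≤ (n : ℝ) ^ (1 - α) / (1 - α) := by
  have hα : 0 < 1 - α := sub_pos.mpr hα1
  cases n with
  | zero => simp [Real.zero_rpow hα.ne']
  | succ n =>
    calc ∑ t ∈ range (n + 1), ((t : ℝ) ^ α)⁻¹
        = ∑ t ∈ range n, (((t + 1 : ℕ) : ℝ) ^ α)⁻¹ := by
          rw [sum_range_succ', Nat.cast_zero, Real.zero_rpow hα0.ne', inv_zero, add_zero]
      _ ≤ (n : ℝ) ^ (1 - α) / (1 - α) := sum_range_inv_succ_rpow_le hα0.le hα1 n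
      _ ≤ ((n + 1 : ℕ) : ℝ) ^ (1 - α) / (1 - α) := by gcongr; exact n.le_succ

/-- Junk values: `(0 ^ α)⁻¹ = 0`, so `a = 0` is allowed. -/
lemma inv_rpow_le_mul_inv_rpow {α a b c : ℝ} (hα : 0 < α) (ha : 0 ≤ a) (hb : 0 ≤ b) (hc : 0 ≤ c)
    (h : a ≠ 0 → 0 < b ∧ b ≤ c * a) : (a ^ α)⁻¹ ≤ c ^ α * (b ^ α)⁻¹ := by
  rcases ha.eq_or_lt with rfl | ha
  · rw [Real.zero_rpow hα.ne', inv_zero]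
    positivity
  · obtain ⟨hb, hbc⟩ := h ha.ne'
    have hpow : b ^ α ≤ c ^ α * a ^ α := by
      rw [← Real.mul_rpow hc ha.le]
      gcongr
    rw [← div_eq_mul_inv, inv_eq_one_div, div_le_div_iff₀ (by positivity) (by positivity), one_mul]
    exact hpow

lemma sub_div_le_two_mul_log_sub_log {a b : ℝ} (ha : 0 < a) (hab : a ≤ b) (hba : b ≤ 3 * a) :
    (b - a) / a ≤ 2 * (Real.log b - Real.log a) := by
  set u := (b - a) / a with hu
  have hu0 : 0 ≤ u := div_nonneg (sub_nonneg.mpr hab) ha.le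
  have hu2 : u ≤ 2 := (div_le_iff₀ ha).mpr (by linarith)
  have hb : b / a = 1 + u := by rw [hu, sub_div, div_self ha.ne', add_sub_cancel]
  have half_le : u / 2 ≤ 2 * u / (u + 2) := by
    rw [div_le_div_iff₀ two_pos (by linarith)]
    nlinarith
  rw [← Real.log_div (ha.trans_le hab).ne' ha.ne', hb]
  linarith [Real.le_log_one_add_of_nonneg hu0]

end RealInequalities

section Stages

lemma le_stageLen (H m : ℕ) : H ≤ stageLen H m := by
  induction m with
  | zero => exact le_rfl
  | succ m ih => exact ih.trans (Nat.le_add_right _ _)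

lemma stageEnd_zero (H : ℕ) : stageEnd H 0 = 0 := rfl

lemma stageEnd_succ (H m : ℕ) : stageEnd H (m + 1) = stageEnd H m + stageLen H m :=
  sum_range_succ _ _

variable {H : ℕ}

lemma stageEnd_strictMono (hH : 0 < H) : StrictMono (stageEnd H) :=
  strictMono_nat_of_lt_succ fun m => by
    rw [stageEnd_succ]
    exact Nat.lt_add_of_pos_right (hH.trans_le (le_stageLen H m))

lemma stageEnd_pos (hH : 0 < H) {m : ℕ} (hm : m ≠ 0) : 0 < stageEnd H m :=
  stageEnd_strictMono hH hm.bot_lt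

lemma gc_stageEnd_curStage (hH : 0 < H) : GaloisConnection (stageEnd H) (curStage H) := by
  intro m n
  have hlt : n < stageEnd H (curStage H n + 1) :=
    Nat.sInf_mem (s := {m | n < stageEnd H (m + 1)}) ⟨n, (stageEnd_strictMono hH).le_apply⟩
  constructor
  · intro h
    exact Nat.lt_succ_iff.mp ((stageEnd_strictMono hH).lt_iff_lt.mp (h.trans_lt hlt))
  · intro h
    cases m with
    | zero => exact n.zero_le
    | succ m =>
      have hmem : m ∉ {m | n < stageEnd H (m + 1)} :=
        Nat.notMem_of_lt_sInf (Nat.lt_of_succ_le h)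
      exact not_lt.mp hmem

lemma globCnt_le (hH : 0 < H) (n : ℕ) : globCnt H n ≤ n :=
  (gc_stageEnd_curStage hH).l_u_le n

lemma globCnt_eq_stageEnd (hH : 0 < H) {m n : ℕ} (hmn : stageEnd H m ≤ n)
    (hnm : n < stageEnd H (m + 1)) : globCnt H n = stageEnd H m := by
  have gc := gc_stageEnd_curStage hH
  have hcur : curStage H n = m :=
    le_antisymm (Nat.lt_succ_iff.mp (gc.lt_iff_lt.mp hnm)) (gc.le_u hmn)
  rw [globCnt, hcur]

lemma curStage_ne_zero_of_globCnt_ne_zero {n : ℕ} (hn : globCnt H n ≠ 0) : curStage H n ≠ 0 :=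
  fun h => hn (by rw [globCnt, h, stageEnd_zero])

lemma stageEnd_succ_le_two_mul_add_one (hH : 0 < H) {m : ℕ} (hm : m ≠ 0) :
    stageEnd H (m + 1) ≤ 2 * stageEnd H m + 1 := by
  suffices hlen : stageLen H m ≤ stageEnd H m + 1 by
    rw [stageEnd_succ]
    linarith
  obtain ⟨m, rfl⟩ := Nat.exists_eq_add_one_of_ne_zero hm
  clear hm
  induction m with
  | zero => simp [stageEnd, stageLen, Nat.div_self hH]
  | succ m ih =>
    rw [stageEnd_succ, stageLen]
    have := Nat.div_le_self (stageLen H (m + 1)) H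
    omega

lemma le_two_mul_globCnt (hH : 0 < H) {n : ℕ} (hn : globCnt H n ≠ 0) : n ≤ 2 * globCnt H n := by
  have hlt : n < stageEnd H (curStage H n + 1) :=
    (gc_stageEnd_curStage hH).lt_iff_lt.mpr (Nat.lt_succ_self _)
  have hle := stageEnd_succ_le_two_mul_add_one hH (curStage_ne_zero_of_globCnt_ne_zero hn)
  rw [globCnt]
  omega

lemma stageEnd_succ_le_mul_stageLen (hH : 0 < H) (m : ℕ) :
    stageEnd H (m + 1) ≤ 2 * H * stageLen H m := by
  induction m with
  | zero =>
    rw [stageEnd_succ, stageEnd_zero, stageLen]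
    nlinarith
  | succ m ih =>
    rw [stageEnd_succ, stageLen]
    set e := stageLen H m
    set q := e / H
    have hq : 1 ≤ q := (Nat.one_le_div_iff hH).mpr (le_stageLen H m)
    have he : e < H * (q + 1) := Nat.lt_mul_div_succ e hH
    have hHq : H + q ≤ H * q + 1 := by nlinarith
    calc stageEnd H (m + 1) + (e + q) ≤ 2 * H * e + (e + q) := by gcongr
      _ ≤ 2 * H * e + 2 * H * q := by
        gcongr
        linarith
      _ = 2 * H * (e + q) := by ring

lemma globCnt_le_mul_checkCnt (hH : 0 < H) (n : ℕ) : globCnt H n ≤ 2 * H * checkCnt H n := by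
  unfold globCnt checkCnt
  cases curStage H n with
  | zero => exact Nat.zero_le _
  | succ m => exact stageEnd_succ_le_mul_stageLen hH m

lemma globCnt_pos_of_checkCnt_ne_zero (hH : 0 < H) {n : ℕ} (hn : checkCnt H n ≠ 0) :
    0 < globCnt H n :=
  stageEnd_pos hH fun h => hn (if_pos h)

end Stages

section StageSums

variable {H : ℕ} {α : ℝ}

lemma inv_globCnt_rpow_le (hH : 0 < H) (hα : 0 < α) (n : ℕ) :
    ((globCnt H n : ℝ) ^ α)⁻¹ ≤ 2 ^ α * ((n : ℝ) ^ α)⁻¹ := by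
  refine inv_rpow_le_mul_inv_rpow hα (Nat.cast_nonneg _) (Nat.cast_nonneg _) zero_le_two
    fun hglob => ?_
  have hglob : globCnt H n ≠ 0 := Nat.cast_ne_zero.mp hglob
  exact ⟨Nat.cast_pos.mpr (hglob.bot_lt.trans_le (globCnt_le hH n)),
    mod_cast le_two_mul_globCnt hH hglob⟩

lemma inv_checkCnt_rpow_le (hH : 0 < H) (hα : 0 < α) (n : ℕ) :
    ((checkCnt H n : ℝ) ^ α)⁻¹ ≤ (2 * H) ^ α * ((globCnt H n : ℝ) ^ α)⁻¹ := by
  refine inv_rpow_le_mul_inv_rpow hα (Nat.cast_nonneg _) (Nat.cast_nonneg _) (by positivity)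
    fun hcheck => ?_
  exact ⟨Nat.cast_pos.mpr (globCnt_pos_of_checkCnt_ne_zero hH (Nat.cast_ne_zero.mp hcheck)),
    mod_cast globCnt_le_mul_checkCnt hH n⟩

lemma sum_inv_checkCnt_rpow_le_mul_sum_inv_globCnt_rpow (hH : 0 < H) (hα : 0 < α) (n : ℕ) :
    ∑ t ∈ range n, ((checkCnt H t : ℝ) ^ α)⁻¹ ≤
      (2 * H) ^ α * ∑ t ∈ range n, ((globCnt H t : ℝ) ^ α)⁻¹ := by
  rw [mul_sum]
  exact sum_le_sum fun t _ => inv_checkCnt_rpow_le hH hα t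

lemma sum_inv_globCnt_rpow_le (hH : 0 < H) (hα0 : 0 < α) (hα1 : α < 1) (n : ℕ) :
    ∑ t ∈ range n, ((globCnt H t : ℝ) ^ α)⁻¹ ≤ 2 ^ α / (1 - α) * (n : ℝ) ^ (1 - α) := by
  calc ∑ t ∈ range n, ((globCnt H t : ℝ) ^ α)⁻¹
      ≤ ∑ t ∈ range n, 2 ^ α * ((t : ℝ) ^ α)⁻¹ :=
        sum_le_sum fun t _ => inv_globCnt_rpow_le hH hα0 t
    _ ≤ 2 ^ α * ((n : ℝ) ^ (1 - α) / (1 - α)) := by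
        rw [← mul_sum]
        gcongr
        exact sum_range_inv_rpow_le hα0 hα1 n
    _ = 2 ^ α / (1 - α) * (n : ℝ) ^ (1 - α) := by ring

lemma sum_inv_checkCnt_rpow_le (hH : 0 < H) (hα0 : 0 < α) (hα1 : α < 1) (n : ℕ) :
    ∑ t ∈ range n, ((checkCnt H t : ℝ) ^ α)⁻¹ ≤
      2 ^ (2 * α) * (H : ℝ) ^ α / (1 - α) * (n : ℝ) ^ (1 - α) := by
  calc ∑ t ∈ range n, ((checkCnt H t : ℝ) ^ α)⁻¹
      ≤ (2 * H) ^ α * ∑ t ∈ range n, ((globCnt H t : ℝ) ^ α)⁻¹ :=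
        sum_inv_checkCnt_rpow_le_mul_sum_inv_globCnt_rpow hH hα0 n
    _ ≤ (2 * H) ^ α * (2 ^ α / (1 - α) * (n : ℝ) ^ (1 - α)) := by
        gcongr
        exact sum_inv_globCnt_rpow_le hH hα0 hα1 n
    _ = 2 ^ (2 * α) * (H : ℝ) ^ α / (1 - α) * (n : ℝ) ^ (1 - α) := by
        rw [Real.mul_rpow zero_le_two H.cast_nonneg, two_mul α, Real.rpow_add two_pos]
        ring

lemma sum_Ico_stageEnd_inv_globCnt (hH : 0 < H) {m n : ℕ} (hmn : stageEnd H m ≤ n)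
    (hnm : n ≤ stageEnd H (m + 1)) :
    ∑ t ∈ Ico (stageEnd H m) n, (globCnt H t : ℝ)⁻¹ = (n - stageEnd H m) / stageEnd H m := by
  have hconst : ∀ t ∈ Ico (stageEnd H m) n, (globCnt H t : ℝ)⁻¹ = (stageEnd H m : ℝ)⁻¹ := by
    intro t ht
    obtain ⟨hmt, htn⟩ := mem_Ico.mp ht
    rw [globCnt_eq_stageEnd hH hmt (htn.trans_le hnm)]
  rw [sum_congr rfl hconst, sum_const, Nat.card_Ico, nsmul_eq_mul, Nat.cast_sub hmn,
    div_eq_mul_inv]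

lemma sum_inv_globCnt_le_of_le_stageEnd (hH : 0 < H) (m : ℕ) :
    ∀ n ≤ stageEnd H m, ∑ t ∈ range n, (globCnt H t : ℝ)⁻¹ ≤ 2 * Real.log n := by
  induction m with
  | zero =>
    intro n hn
    simp [Nat.le_zero.mp hn]
  | succ m ih =>
    intro n hn
    rcases le_total n (stageEnd H m) with hnm | hmn
    · exact ih n hnm
    rw [← sum_range_add_sum_Ico _ hmn, sum_Ico_stageEnd_inv_globCnt hH hmn hn]
    rcases eq_or_ne m 0 with rfl | hm
    · simpa [stageEnd_zero] using Real.log_natCast_nonneg n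
    have hpos : 0 < stageEnd H m := stageEnd_pos hH hm
    have hle : n ≤ 3 * stageEnd H m := by
      have := stageEnd_succ_le_two_mul_add_one hH hm
      omega
    have hlast := sub_div_le_two_mul_log_sub_log (Nat.cast_pos.mpr hpos) (Nat.cast_le.mpr hmn)
      (mod_cast hle : (n : ℝ) ≤ 3 * stageEnd H m)
    linarith [ih _ le_rfl]

lemma sum_inv_globCnt_le (hH : 0 < H) (n : ℕ) :
    ∑ t ∈ range n, (globCnt H t : ℝ)⁻¹ ≤ 2 * Real.log n :=
  sum_inv_globCnt_le_of_le_stageEnd hH n n (stageEnd_strictMono hH).le_apply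

lemma sum_inv_checkCnt_le (hH : 0 < H) (n : ℕ) :
    ∑ t ∈ range n, (checkCnt H t : ℝ)⁻¹ ≤ 4 * H * Real.log n := by
  calc ∑ t ∈ range n, (checkCnt H t : ℝ)⁻¹
      ≤ 2 * H * ∑ t ∈ range n, (globCnt H t : ℝ)⁻¹ := by
        simpa only [Real.rpow_one] using
          sum_inv_checkCnt_rpow_le_mul_sum_inv_globCnt_rpow hH one_pos n
    _ ≤ 2 * H * (2 * Real.log n) := by
        gcongr
        exact sum_inv_globCnt_le hH n
    _ = 4 * H * Real.log n := by ring

end StageSums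

section Regrouping

lemma sum_apply_count {Y M : Type*} [Fintype Y] [DecidableEq Y] [AddCommMonoid M] (z : ℕ → Y)
    (f : Y → ℕ → M) (n : ℕ) :
    ∑ k ∈ range n, f (z k) (Nat.count (z · = z k) k) =
      ∑ y, ∑ t ∈ range (Nat.count (z · = y) n), f y t := by
  induction n with
  | zero => simp
  | succ n ih =>
    have hstep (y : Y) : ∑ t ∈ range (Nat.count (z · = y) (n + 1)), f y t =
        ∑ t ∈ range (Nat.count (z · = y) n), f y t +
          if z n = y then f y (Nat.count (z · = y) n) else 0 := by
      rw [Nat.count_succ]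
      split_ifs
      · rw [sum_range_succ]
      · rw [add_zero, add_zero]
    simp only [sum_range_succ, ih, hstep, sum_add_distrib, sum_ite_eq, mem_univ, if_true]

lemma sum_div_apply_count_le {Y : Type*} [Fintype Y] [DecidableEq Y] (z : ℕ → Y) {w : Y → ℝ}
    (hw : ∀ y, 0 ≤ w y) {g F : ℕ → ℝ} (hg : ∀ n, ∑ t ∈ range n, (g t)⁻¹ ≤ F n) (n : ℕ) :
    ∑ k ∈ range n, w (z k) / g (Nat.count (z · = z k) k) ≤
      ∑ y, w y * F (Nat.count (z · = y) n) := by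
  rw [sum_apply_count z (fun y t => w y / g t)]
  simp only [div_eq_mul_inv, ← mul_sum]
  exact sum_le_sum fun y _ => mul_le_mul_of_nonneg_left (hg _) (hw y)

variable {S A B : Type*} [DecidableEq S] [DecidableEq A] [DecidableEq B]

lemma Nvis_succ_eq_count (x : ℕ → ℕ → S × A × B) (h k : ℕ) (y : S × A × B) :
    Nvis x h (k + 1) y = Nat.count (fun j => x (j + 1) h = y) k := by
  rw [Nvis, Nat.count_eq_card_filter_range, range_eq_Ico, ← zero_add 1, ← map_add_right_Ico,
    filter_map, card_map]
  rfl

lemma sum_div_apply_Nvis_le [Fintype S] [Fintype A] [Fintype B] (x : ℕ → ℕ → S × A × B)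
    {w : ℕ → S × A × B → ℝ} (hw : ∀ h y, 0 ≤ w h y) {g F : ℕ → ℝ} {C : ℝ}
    (hg : ∀ n, ∑ t ∈ range n, (g t)⁻¹ ≤ C * F n) (H K : ℕ) :
    ∑ k ∈ Icc 1 K, ∑ h ∈ Icc 1 H, w h (x k h) / g (Nvis x h k (x k h)) ≤
      C * ∑ y, ∑ h ∈ Icc 1 H, w h y * F (Nvis x h (K + 1) y) := by
  rw [sum_comm, sum_comm (s := univ), mul_sum]
  refine sum_le_sum fun h _ => ?_
  calc ∑ k ∈ Icc 1 K, w h (x k h) / g (Nvis x h k (x k h))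
      = ∑ k ∈ range K, w h (x (k + 1) h) / g (Nvis x h (k + 1) (x (k + 1) h)) := by
        rw [range_eq_Ico, sum_Ico_add' (fun k => w h (x k h) / g (Nvis x h k (x k h))),
          zero_add, Ico_add_one_right_eq_Icc]
    _ ≤ ∑ y, w h y * (C * F (Nvis x h (K + 1) y)) := by
        simp only [Nvis_succ_eq_count]
        exact sum_div_apply_count_le (fun k => x (k + 1) h) (hw h) hg K
    _ = C * ∑ y, w h y * F (Nvis x h (K + 1) y) := by
        rw [mul_sum]
        exact sum_congr rfl fun y _ => mul_left_comm _ _ _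

end Regrouping

/-- variant of Lemma 11 of Zhang–Zhou–Ji. Weighted pigeonhole bounds for
the stage-based counts `n_h^k` and `ň_h^k` along any trajectory of Algorithm 1, for any
`α ∈ (0,1)` and for `α = 1`.  Terms with `n_h^k = 0` (resp. `ň_h^k = 0`) vanish, since in
Lean `w / 0 = 0` and `0 ^ α = 0` for `α > 0`. `Nvis x h (K+1) y = N_h^{K+1}(y)` is the total
number of visits to `y` at step `h` after all `K` episodes. -/
theorem statement14 {S A B : Type*} [Fintype S] [Fintype A] [Fintype B]
    [DecidableEq S] [DecidableEq A] [DecidableEq B]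
    (H K : ℕ) (hH : 1 ≤ H) (hK : 1 ≤ K)
    (x : ℕ → ℕ → S × A × B)
    (w : ℕ → S × A × B → ℝ) (hw : ∀ h y, 0 ≤ w h y)
    (α : ℝ) (hα0 : 0 < α) (hα1 : α < 1) :
    (∑ k ∈ Finset.Icc 1 K, ∑ h ∈ Finset.Icc 1 H, w h (x k h) / (nGlob x H h k : ℝ) ^ α
        ≤ (2 : ℝ) ^ α / (1 - α) *
          ∑ y : S × A × B, ∑ h ∈ Finset.Icc 1 H, w h y * (Nvis x h (K + 1) y : ℝ) ^ (1 - α)) ∧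
    (∑ k ∈ Finset.Icc 1 K, ∑ h ∈ Finset.Icc 1 H, w h (x k h) / (nCheck x H h k : ℝ) ^ α
        ≤ (2 : ℝ) ^ (2 * α) * (H : ℝ) ^ α / (1 - α) *
          ∑ y : S × A × B, ∑ h ∈ Finset.Icc 1 H, w h y * (Nvis x h (K + 1) y : ℝ) ^ (1 - α)) ∧
    (∑ k ∈ Finset.Icc 1 K, ∑ h ∈ Finset.Icc 1 H, w h (x k h) / (nGlob x H h k : ℝ)
        ≤ 2 * ∑ y : S × A × B, ∑ h ∈ Finset.Icc 1 H,
            w h y * Real.log (Nvis x h (K + 1) y)) ∧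
    (∑ k ∈ Finset.Icc 1 K, ∑ h ∈ Finset.Icc 1 H, w h (x k h) / (nCheck x H h k : ℝ)
        ≤ 4 * (H : ℝ) * ∑ y : S × A × B, ∑ h ∈ Finset.Icc 1 H,
            w h y * Real.log (Nvis x h (K + 1) y)) := by
  exact ⟨sum_div_apply_Nvis_le x hw (sum_inv_globCnt_rpow_le hH hα0 hα1) H K,
    sum_div_apply_Nvis_le x hw (sum_inv_checkCnt_rpow_le hH hα0 hα1) H K,
    sum_div_apply_Nvis_le x hw (sum_inv_globCnt_le hH) H K,
    sum_div_apply_Nvis_le x hw (sum_inv_checkCnt_le hH) H K⟩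

end ZSMG
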